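/- Let (S_t)_{t∈[0,T]} be a mean-continuous family of Ê-integrable random variables. Then the maps t ↦ L_t(S_t) and t ↦ U_t(S_t) are continuous on [0,T]. In particular, taking S ≡ 0, the maps t ↦ L_t(0) and t ↦ U_t(0) are continuous and bounded on [0,T]. -/

import Mathlib

open MeasureTheory Set Filter

/-- The sublinear expectation `Ê[X] = sup_{P ∈ Ps} ∫ X dP`. -/
noncomputable def sublinE {Ω : Type*} [MeasurableSpace Ω] (Ps : Set (Measure Ω)) (X : Ω → ℝ) : ℝ :=
  sSup ((fun P => ∫ ω, X ω ∂P) '' Ps)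

/-- `X` is Ê-integrable: measurable, integrable w.r.t. each `P ∈ Ps`, and
`sup_{P ∈ Ps} ∫ |X| dP < ∞`. -/
def EIntegrable {Ω : Type*} [MeasurableSpace Ω] (Ps : Set (Measure Ω)) (X : Ω → ℝ) : Prop :=
  Measurable X ∧ (∀ P ∈ Ps, Integrable X P) ∧ ∃ M : ℝ, ∀ P ∈ Ps, (∫ ω, |X ω| ∂P) ≤ M

/-- Assumption (H_r) on the barriers `l, u` and the running loss function `hb`,
with constants `0 < cl ≤ cu` and `Ch > 0`. -/
def HrAssumption {Ω : Type*} [MeasurableSpace Ω] (T cl cu Ch : ℝ)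
    (l u : ℝ → ℝ) (hb : ℝ → Ω → ℝ → ℝ) : Prop :=
  0 < cl ∧ cl ≤ cu ∧ 0 < Ch ∧
  ContinuousOn l (Icc 0 T) ∧ ContinuousOn u (Icc 0 T) ∧
  (∃ M : ℝ, ∀ t ∈ Icc (0:ℝ) T, |l t| ≤ M ∧ |u t| ≤ M) ∧
  (∃ ε > 0, ∀ t ∈ Icc (0:ℝ) T, ε ≤ u t - l t) ∧
  (∀ t y, Measurable fun ω => hb t ω y) ∧
  (∀ ε > 0, ∃ δ > 0, ∀ (ω : Ω) (t t' y y' : ℝ),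
      |t - t'| + |y - y'| < δ → |hb t ω y - hb t' ω y'| < ε) ∧
  (∀ t ω, StrictMono (hb t ω)) ∧
  (∀ t ω y, |hb t ω y| ≤ Ch * (1 + |y|)) ∧
  (∀ t ω y y', cl * |y - y'| ≤ |hb t ω y - hb t ω y'| ∧
    |hb t ω y - hb t ω y'| ≤ cu * |y - y'|)

/-- `H̄(t, x, X) = Ê[hb(t, x + X − Ê[X])]`. -/
noncomputable def Hbar {Ω : Type*} [MeasurableSpace Ω] (Ps : Set (Measure Ω))
    (hb : ℝ → Ω → ℝ → ℝ) (t x : ℝ) (X : Ω → ℝ) : ℝ :=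
  sublinE Ps (fun ω => hb t ω (x + X ω - sublinE Ps X))

/-- A family `(S_t)_{t ∈ [0,T]}` of Ê-integrable random variables which is continuous in mean. -/
def MeanContinuous {Ω : Type*} [MeasurableSpace Ω] (Ps : Set (Measure Ω)) (T : ℝ)
    (S : ℝ → Ω → ℝ) : Prop :=
  (∀ t ∈ Icc (0:ℝ) T, EIntegrable Ps (S t)) ∧
  ∀ t ∈ Icc (0:ℝ) T,
    Tendsto (fun s => sublinE Ps fun ω => |S s ω - S t ω|) (nhdsWithin t (Icc 0 T)) (nhds 0)

/-- The minimality (Skorokhod) condition in its equivalent increment form: `R` may only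
increase on intervals where `φ` stays strictly below `u` and may only decrease on intervals
where `φ` stays strictly above `l`. -/
def MinimalityIncr (T : ℝ) (φ l u R : ℝ → ℝ) : Prop :=
  ∀ s t : ℝ, 0 ≤ s → s < t → t ≤ T →
    ((∀ v, s < v → v ≤ t → φ v < u v) → R s ≤ R t) ∧
    ((∀ v, s < v → v ≤ t → l v < φ v) → R t ≤ R s)

/-- `(Y, R)` solves the backward Skorokhod problem with sublinear expectation for the data
`(Ybar, hb, l, u)`. -/
def IsBSPsol {Ω : Type*} [MeasurableSpace Ω] (Ps : Set (Measure Ω)) (T : ℝ)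
    (hb : ℝ → Ω → ℝ → ℝ) (l u : ℝ → ℝ) (Ybar Y : ℝ → Ω → ℝ) (R : ℝ → ℝ) : Prop :=
  (∀ t ∈ Icc (0:ℝ) T, ∀ ω, Y t ω = Ybar t ω + R T - R t) ∧
  (∀ t ∈ Icc (0:ℝ) T, l t ≤ sublinE Ps (fun ω => hb t ω (Y t ω)) ∧
    sublinE Ps (fun ω => hb t ω (Y t ω)) ≤ u t) ∧
  ContinuousOn R (Icc 0 T) ∧ BoundedVariationOn R (Icc 0 T) ∧ R 0 = 0 ∧
  MinimalityIncr T (fun v => sublinE Ps (fun ω => hb v ω (Y v ω))) l u R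

/-!
Since the loss grows at rate at least `c` in the position, so does `x ↦ Ê[h(t, x + X − Ê[X])]`.
The root `x_s` at time `s` therefore differs from `x_t` by at most `c⁻¹` times the amount by which
`x_t` misses the level `g_s` at time `s`. That defect tends to zero as `s → t`: sublinear
expectation is monotone and subadditive, so the expected loss is continuous in the random variable
for the seminorm `Ê[|·|]`, and in time by the uniform continuity of the loss.
-/

open scoped Topology NNReal

section SublinearExpectation

variable {Ω : Type*} [MeasurableSpace Ω] {Ps : Set (Measure Ω)} {X Y Z : Ω → ℝ}

namespace EIntegrable

protected theorem abs (hX : EIntegrable Ps X) : EIntegrable Ps fun ω => |X ω| :=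
  ⟨hX.1.abs, fun P hP => (hX.2.1 P hP).abs, by simpa only [abs_abs] using hX.2.2⟩

protected theorem add (hX : EIntegrable Ps X) (hY : EIntegrable Ps Y) :
    EIntegrable Ps fun ω => X ω + Y ω := by
  obtain ⟨hXm, hXi, A, hA⟩ := hX
  obtain ⟨hYm, hYi, B, hB⟩ := hY
  refine ⟨hXm.add hYm, fun P hP => (hXi P hP).add (hYi P hP), A + B, fun P hP => ?_⟩
  calc ∫ ω, |X ω + Y ω| ∂P
      ≤ ∫ ω, (|X ω| + |Y ω|) ∂P :=
        integral_mono ((hXi P hP).add (hYi P hP)).abs ((hXi P hP).abs.add (hYi P hP).abs)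
          fun ω => abs_add_le (X ω) (Y ω)
    _ = (∫ ω, |X ω| ∂P) + ∫ ω, |Y ω| ∂P := integral_add (hXi P hP).abs (hYi P hP).abs
    _ ≤ A + B := add_le_add (hA P hP) (hB P hP)

protected theorem const_mul (hX : EIntegrable Ps X) (k : ℝ) :
    EIntegrable Ps fun ω => k * X ω := by
  obtain ⟨hXm, hXi, A, hA⟩ := hX
  refine ⟨hXm.const_mul k, fun P hP => (hXi P hP).const_mul k, |k| * A, fun P hP => ?_⟩
  simp only [abs_mul, integral_const_mul]
  exact mul_le_mul_of_nonneg_left (hA P hP) (abs_nonneg k)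

protected theorem sub (hX : EIntegrable Ps X) (hY : EIntegrable Ps Y) :
    EIntegrable Ps fun ω => X ω - Y ω := by
  simpa only [neg_one_mul, ← sub_eq_add_neg] using hX.add (hY.const_mul (-1))

protected theorem mono' (hY : EIntegrable Ps Y) (hX : Measurable X) (h : ∀ ω, |X ω| ≤ Y ω) :
    EIntegrable Ps X := by
  obtain ⟨-, hYi, B, hB⟩ := hY
  have hXi : ∀ P ∈ Ps, Integrable X P := fun P hP =>
    (hYi P hP).mono' hX.aestronglyMeasurable (.of_forall h)
  exact ⟨hX, hXi, B, fun P hP =>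
    (integral_mono (hXi P hP).abs (hYi P hP).abs fun ω => (h ω).trans (le_abs_self _)).trans
      (hB P hP)⟩

theorem integral_le_sublinE (hX : EIntegrable Ps X) {P : Measure Ω} (hP : P ∈ Ps) :
    ∫ ω, X ω ∂P ≤ sublinE Ps X := by
  obtain ⟨-, -, A, hA⟩ := hX
  refine le_csSup ⟨A, ?_⟩ (mem_image_of_mem _ hP)
  rintro _ ⟨Q, hQ, rfl⟩
  exact (le_abs_self _).trans (abs_integral_le_integral_abs.trans (hA Q hQ))

end EIntegrable

theorem eintegrable_const (hprob : ∀ P ∈ Ps, IsProbabilityMeasure P) (a : ℝ) :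
    EIntegrable Ps fun _ => a := by
  refine ⟨measurable_const, fun P hP => ?_, |a|, fun P hP => ?_⟩
  · have := hprob P hP
    exact integrable_const a
  · have := hprob P hP
    simp

theorem sublinE_le (hPs : Ps.Nonempty) {a : ℝ} (h : ∀ P ∈ Ps, ∫ ω, X ω ∂P ≤ a) :
    sublinE Ps X ≤ a :=
  csSup_le (hPs.image _) (forall_mem_image.2 h)

theorem sublinE_mono (hPs : Ps.Nonempty) (hX : EIntegrable Ps X) (hY : EIntegrable Ps Y)
    (h : ∀ ω, X ω ≤ Y ω) : sublinE Ps X ≤ sublinE Ps Y :=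
  sublinE_le hPs fun P hP =>
    (integral_mono (hX.2.1 P hP) (hY.2.1 P hP) h).trans (hY.integral_le_sublinE hP)

theorem sublinE_add_le (hPs : Ps.Nonempty) (hX : EIntegrable Ps X) (hY : EIntegrable Ps Y) :
    sublinE Ps (fun ω => X ω + Y ω) ≤ sublinE Ps X + sublinE Ps Y :=
  sublinE_le hPs fun P hP =>
    (integral_add (hX.2.1 P hP) (hY.2.1 P hP)).trans_le
      (add_le_add (hX.integral_le_sublinE hP) (hY.integral_le_sublinE hP))

theorem sublinE_const_mul {k : ℝ} (hk : 0 ≤ k) :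
    sublinE Ps (fun ω => k * X ω) = k * sublinE Ps X := by
  simp only [sublinE, integral_const_mul, sSup_image', Real.mul_iSup_of_nonneg hk]

theorem sublinE_const (hPs : Ps.Nonempty) (hprob : ∀ P ∈ Ps, IsProbabilityMeasure P) (a : ℝ) :
    sublinE Ps (fun _ => a) = a := by
  have hint : ∀ P ∈ Ps, ∫ _, a ∂P = a := fun P hP => by
    have := hprob P hP
    simp
  rw [sublinE, image_congr hint, hPs.image_const, csSup_singleton]

theorem sublinE_add_const (hPs : Ps.Nonempty) (hprob : ∀ P ∈ Ps, IsProbabilityMeasure P)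
    (hX : EIntegrable Ps X) (a : ℝ) :
    sublinE Ps (fun ω => X ω + a) = sublinE Ps X + a := by
  apply le_antisymm
  · simpa only [sublinE_const hPs hprob] using
      sublinE_add_le hPs hX (eintegrable_const hprob a)
  · have h := sublinE_add_le hPs (hX.add (eintegrable_const hprob a))
      (eintegrable_const hprob (-a))
    simp only [add_neg_cancel_right, sublinE_const hPs hprob] at h
    linarith

theorem sublinE_le_add_of_abs_sub_le (hPs : Ps.Nonempty) (hX : EIntegrable Ps X)
    (hY : EIntegrable Ps Y) (hZ : EIntegrable Ps Z) (h : ∀ ω, |X ω - Y ω| ≤ Z ω) :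
    sublinE Ps X ≤ sublinE Ps Y + sublinE Ps Z :=
  (sublinE_mono hPs hX (hY.add hZ) fun ω =>
    sub_le_iff_le_add'.1 ((le_abs_self _).trans (h ω))).trans (sublinE_add_le hPs hY hZ)

theorem abs_sublinE_sub_le (hPs : Ps.Nonempty) (hX : EIntegrable Ps X)
    (hY : EIntegrable Ps Y) (hZ : EIntegrable Ps Z) (h : ∀ ω, |X ω - Y ω| ≤ Z ω) :
    |sublinE Ps X - sublinE Ps Y| ≤ sublinE Ps Z :=
  abs_sub_le_iff.2
    ⟨sub_le_iff_le_add'.2 (sublinE_le_add_of_abs_sub_le hPs hX hY hZ h),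
      sub_le_iff_le_add'.2 (sublinE_le_add_of_abs_sub_le hPs hY hX hZ fun ω =>
        (abs_sub_comm _ _).trans_le (h ω))⟩

end SublinearExpectation

section ExpectedLoss

variable {Ω : Type*} [MeasurableSpace Ω] {Ps : Set (Measure Ω)} {K K' : ℝ≥0} {c : ℝ}
  {f g : Ω → ℝ → ℝ} {X Y : Ω → ℝ}

/-- A random loss function at a fixed time: `f ω y` is the loss at position `y`, Ê-integrable for
each `y` and `K`-Lipschitz in `y`. -/
structure IsLipschitzLoss (Ps : Set (Measure Ω)) (K : ℝ≥0) (f : Ω → ℝ → ℝ) : Prop where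
  eintegrable : ∀ y, EIntegrable Ps fun ω => f ω y
  lipschitzWith : ∀ ω, LipschitzWith K (f ω)

/-- The sublinear expected loss `Ê[f(x + X − Ê[X])]` of the recentred random variable. This is
`Hbar` at a fixed time, stated for a single loss `f` so that losses at different times, and time
sets other than `ℝ`, can be treated alike. -/
noncomputable def expectedLoss (Ps : Set (Measure Ω)) (f : Ω → ℝ → ℝ) (x : ℝ) (X : Ω → ℝ) : ℝ :=
  sublinE Ps fun ω => f ω (x + X ω - sublinE Ps X)

theorem IsLipschitzLoss.eintegrable_comp (hf : IsLipschitzLoss Ps K f) (hX : EIntegrable Ps X) :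
    EIntegrable Ps fun ω => f ω (X ω) := by
  have hmeas : Measurable fun ω => f ω (X ω) :=
    (measurable_uncurry_of_continuous_of_measurable (u := fun y ω => f ω y)
      (fun ω => (hf.lipschitzWith ω).continuous) fun y => (hf.eintegrable y).1).comp
      (hX.1.prodMk measurable_id)
  refine ((hf.eintegrable 0).abs.add (hX.abs.const_mul K)).mono' hmeas fun ω => ?_
  have hlip : |f ω (X ω) - f ω 0| ≤ K * |X ω| := by
    simpa only [Real.dist_eq, sub_zero] using (hf.lipschitzWith ω).dist_le_mul (X ω) 0
  calc |f ω (X ω)| = |f ω 0 + (f ω (X ω) - f ω 0)| := by rw [add_sub_cancel]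
    _ ≤ |f ω 0| + |f ω (X ω) - f ω 0| := abs_add_le _ _
    _ ≤ |f ω 0| + K * |X ω| := by gcongr

theorem IsLipschitzLoss.eintegrable_recentred (hf : IsLipschitzLoss Ps K f)
    (hprob : ∀ P ∈ Ps, IsProbabilityMeasure P) (hX : EIntegrable Ps X) (x a : ℝ) :
    EIntegrable Ps fun ω => f ω (x + X ω - a) :=
  hf.eintegrable_comp (((eintegrable_const hprob x).add hX).sub (eintegrable_const hprob a))

theorem mul_sub_le_expectedLoss_sub (hPs : Ps.Nonempty)
    (hprob : ∀ P ∈ Ps, IsProbabilityMeasure P) (hf : IsLipschitzLoss Ps K f)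
    (hexp : ∀ ω a b, a ≤ b → c * (b - a) ≤ f ω b - f ω a) (hX : EIntegrable Ps X)
    {x y : ℝ} (hxy : x ≤ y) :
    c * (y - x) ≤ expectedLoss Ps f y X - expectedLoss Ps f x X := by
  have hx := hf.eintegrable_recentred hprob hX x (sublinE Ps X)
  have hy := hf.eintegrable_recentred hprob hX y (sublinE Ps X)
  rw [le_sub_iff_add_le']
  calc expectedLoss Ps f x X + c * (y - x)
      = sublinE Ps (fun ω => f ω (x + X ω - sublinE Ps X) + c * (y - x)) :=
        (sublinE_add_const hPs hprob hx _).symm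
    _ ≤ expectedLoss Ps f y X := by
        refine sublinE_mono hPs (hx.add (eintegrable_const hprob _)) hy fun ω => ?_
        have := hexp ω (x + X ω - sublinE Ps X) (y + X ω - sublinE Ps X) (by gcongr)
        linarith

theorem mul_abs_sub_le_abs_expectedLoss_sub (hPs : Ps.Nonempty)
    (hprob : ∀ P ∈ Ps, IsProbabilityMeasure P) (hf : IsLipschitzLoss Ps K f)
    (hexp : ∀ ω a b, a ≤ b → c * (b - a) ≤ f ω b - f ω a) (hX : EIntegrable Ps X) (x y : ℝ) :
    c * |x - y| ≤ |expectedLoss Ps f x X - expectedLoss Ps f y X| := by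
  rcases le_total y x with h | h
  · rw [abs_of_nonneg (sub_nonneg.2 h)]
    exact (mul_sub_le_expectedLoss_sub hPs hprob hf hexp hX h).trans (le_abs_self _)
  · rw [abs_sub_comm x, abs_of_nonneg (sub_nonneg.2 h), abs_sub_comm (expectedLoss Ps f x X)]
    exact (mul_sub_le_expectedLoss_sub hPs hprob hf hexp hX h).trans (le_abs_self _)

theorem abs_expectedLoss_sub_le_mul_sublinE (hPs : Ps.Nonempty)
    (hprob : ∀ P ∈ Ps, IsProbabilityMeasure P) (hf : IsLipschitzLoss Ps K f)
    (hX : EIntegrable Ps X) (hY : EIntegrable Ps Y) (x : ℝ) :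
    |expectedLoss Ps f x X - expectedLoss Ps f x Y| ≤
      2 * K * sublinE Ps fun ω => |X ω - Y ω| := by
  have hXY := (hX.sub hY).abs
  set d := sublinE Ps fun ω => |X ω - Y ω|
  have hmean : |sublinE Ps X - sublinE Ps Y| ≤ d :=
    abs_sublinE_sub_le hPs hX hY hXY fun _ => le_rfl
  have hpointwise (ω : Ω) :
      |f ω (x + X ω - sublinE Ps X) - f ω (x + Y ω - sublinE Ps Y)| ≤ K * (|X ω - Y ω| + d) := by
    refine ((hf.lipschitzWith ω).dist_le_mul _ _).trans ?_
    rw [Real.dist_eq, show x + X ω - sublinE Ps X - (x + Y ω - sublinE Ps Y) =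
      (X ω - Y ω) - (sublinE Ps X - sublinE Ps Y) by ring]
    gcongr
    exact (abs_sub _ _).trans (by gcongr)
  calc |expectedLoss Ps f x X - expectedLoss Ps f x Y|
      ≤ sublinE Ps fun ω => K * (|X ω - Y ω| + d) :=
        abs_sublinE_sub_le hPs (hf.eintegrable_recentred hprob hX _ _)
          (hf.eintegrable_recentred hprob hY _ _)
          ((hXY.add (eintegrable_const hprob d)).const_mul K) hpointwise
    _ = K * (d + d) := by
        rw [sublinE_const_mul K.coe_nonneg, sublinE_add_const hPs hprob hXY]
    _ = 2 * K * d := by ring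

theorem abs_expectedLoss_sub_le_of_abs_sub_le (hPs : Ps.Nonempty)
    (hprob : ∀ P ∈ Ps, IsProbabilityMeasure P) (hf : IsLipschitzLoss Ps K f)
    (hg : IsLipschitzLoss Ps K' g) (hX : EIntegrable Ps X) {ε : ℝ}
    (h : ∀ ω y, |f ω y - g ω y| ≤ ε) (x : ℝ) :
    |expectedLoss Ps f x X - expectedLoss Ps g x X| ≤ ε :=
  (abs_sublinE_sub_le hPs (hf.eintegrable_recentred hprob hX _ _)
    (hg.eintegrable_recentred hprob hX _ _) (eintegrable_const hprob ε)
    fun ω => h ω _).trans_eq (sublinE_const hPs hprob ε)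

section Limits

variable {ι : Type*} {F : Filter ι} {κ : ι → ℝ≥0} {h : ι → Ω → ℝ → ℝ} {S : ι → Ω → ℝ}

theorem tendsto_expectedLoss (hPs : Ps.Nonempty) (hprob : ∀ P ∈ Ps, IsProbabilityMeasure P)
    (hh : ∀ᶠ i in F, IsLipschitzLoss Ps (κ i) (h i)) (hf : IsLipschitzLoss Ps K f)
    (hhf : TendstoUniformly (fun i (p : Ω × ℝ) => h i p.1 p.2) (fun p => f p.1 p.2) F)
    (hS : ∀ᶠ i in F, EIntegrable Ps (S i)) (hX : EIntegrable Ps X)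
    (hSX : Tendsto (fun i => sublinE Ps fun ω => |S i ω - X ω|) F (𝓝 0)) (x : ℝ) :
    Tendsto (fun i => expectedLoss Ps (h i) x (S i)) F (𝓝 (expectedLoss Ps f x X)) := by
  have hposition : Tendsto (fun i => expectedLoss Ps f x (S i)) F (𝓝 (expectedLoss Ps f x X)) := by
    rw [tendsto_iff_dist_tendsto_zero]
    refine squeeze_zero' (.of_forall fun _ => dist_nonneg) ?_
      (by simpa only [mul_zero] using hSX.const_mul (2 * (K : ℝ)))
    filter_upwards [hS] with i hSi
    exact abs_expectedLoss_sub_le_mul_sublinE hPs hprob hf hSi hX x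
  have hloss : Tendsto (fun i => expectedLoss Ps (h i) x (S i) - expectedLoss Ps f x (S i))
      F (𝓝 0) := by
    refine Metric.tendsto_nhds.2 fun ε hε => ?_
    filter_upwards [hh, hS, Metric.tendstoUniformly_iff.1 hhf (ε / 2) (half_pos hε)]
      with i hhi hSi hclose
    rw [dist_zero_right]
    refine (abs_expectedLoss_sub_le_of_abs_sub_le hPs hprob hhi hf hSi (fun ω y => ?_) x).trans_lt
      (half_lt_self hε)
    rw [abs_sub_comm]
    exact (hclose (ω, y)).le
  simpa only [sub_add_cancel, zero_add] using hloss.add hposition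

theorem tendsto_of_tendsto_expectedLoss (hPs : Ps.Nonempty)
    (hprob : ∀ P ∈ Ps, IsProbabilityMeasure P) (hc : 0 < c)
    (hh : ∀ᶠ i in F, IsLipschitzLoss Ps (κ i) (h i))
    (hexp : ∀ᶠ i in F, ∀ ω a b, a ≤ b → c * (b - a) ≤ h i ω b - h i ω a)
    (hf : IsLipschitzLoss Ps K f)
    (hhf : TendstoUniformly (fun i (p : Ω × ℝ) => h i p.1 p.2) (fun p => f p.1 p.2) F)
    (hS : ∀ᶠ i in F, EIntegrable Ps (S i)) (hX : EIntegrable Ps X)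
    (hSX : Tendsto (fun i => sublinE Ps fun ω => |S i ω - X ω|) F (𝓝 0)) {x : ι → ℝ} {y : ℝ}
    (hx : Tendsto (fun i => expectedLoss Ps (h i) (x i) (S i)) F (𝓝 (expectedLoss Ps f y X))) :
    Tendsto x F (𝓝 y) := by
  have hdefect : Tendsto
      (fun i => |expectedLoss Ps (h i) (x i) (S i) - expectedLoss Ps (h i) y (S i)|) F (𝓝 0) := by
    simpa only [sub_self, abs_zero] using
      (hx.sub (tendsto_expectedLoss hPs hprob hh hf hhf hS hX hSX y)).abs
  rw [tendsto_iff_dist_tendsto_zero]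
  refine squeeze_zero' (.of_forall fun _ => dist_nonneg) ?_
    (by simpa only [mul_zero] using hdefect.const_mul c⁻¹)
  filter_upwards [hh, hexp, hS] with i hhi hexpi hSi
  rw [Real.dist_eq, le_inv_mul_iff₀ hc]
  exact mul_abs_sub_le_abs_expectedLoss_sub hPs hprob hhi hexpi hSi (x i) y

end Limits

theorem continuousOn_of_expectedLoss_eq {τ : Type*} [TopologicalSpace τ] {I : Set τ}
    (hPs : Ps.Nonempty) (hprob : ∀ P ∈ Ps, IsProbabilityMeasure P) (hc : 0 < c)
    {κ : τ → ℝ≥0} {h : τ → Ω → ℝ → ℝ} (hh : ∀ t ∈ I, IsLipschitzLoss Ps (κ t) (h t))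
    (hexp : ∀ t ∈ I, ∀ ω a b, a ≤ b → c * (b - a) ≤ h t ω b - h t ω a)
    (hcont : ∀ t ∈ I, TendstoUniformly (fun s (p : Ω × ℝ) => h s p.1 p.2)
      (fun p => h t p.1 p.2) (𝓝[I] t))
    {S : τ → Ω → ℝ} (hS : ∀ t ∈ I, EIntegrable Ps (S t))
    (hSc : ∀ t ∈ I, Tendsto (fun s => sublinE Ps fun ω => |S s ω - S t ω|) (𝓝[I] t) (𝓝 0))
    {g x : τ → ℝ} (hg : ContinuousOn g I)
    (hx : ∀ t ∈ I, expectedLoss Ps (h t) (x t) (S t) = g t) : ContinuousOn x I := by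
  intro t ht
  have heventually {p : τ → Prop} (hp : ∀ s ∈ I, p s) : ∀ᶠ s in 𝓝[I] t, p s :=
    eventually_mem_nhdsWithin.mono hp
  have hlevel : Tendsto (fun s => expectedLoss Ps (h s) (x s) (S s)) (𝓝[I] t)
      (𝓝 (expectedLoss Ps (h t) (x t) (S t))) := by
    rw [hx t ht]
    exact (hg t ht).congr' (heventually fun s hs => (hx s hs).symm)
  exact tendsto_of_tendsto_expectedLoss hPs hprob hc (heventually hh) (heventually hexp) (hh t ht)
    (hcont t ht) (heventually hS) (hS t ht) (hSc t ht) hlevel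

end ExpectedLoss

namespace HrAssumption

variable {Ω : Type*} [MeasurableSpace Ω] {T cl cu Ch : ℝ} {l u : ℝ → ℝ} {hb : ℝ → Ω → ℝ → ℝ}

theorem isLipschitzLoss (hHr : HrAssumption T cl cu Ch l u hb) {Ps : Set (Measure Ω)}
    (hprob : ∀ P ∈ Ps, IsProbabilityMeasure P) (t : ℝ) :
    IsLipschitzLoss Ps cu.toNNReal (hb t) := by
  obtain ⟨-, -, -, -, -, -, -, hmeas, -, -, hgrowth, hlip⟩ := hHr
  exact ⟨fun y => (eintegrable_const hprob _).mono' (hmeas t y) fun ω => hgrowth t ω y,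
    fun ω => .of_dist_le' fun a b => (hlip t ω a b).2⟩

theorem mul_sub_le (hHr : HrAssumption T cl cu Ch l u hb) (t : ℝ) (ω : Ω) (a b : ℝ)
    (hab : a ≤ b) : cl * (b - a) ≤ hb t ω b - hb t ω a := by
  obtain ⟨-, -, -, -, -, -, -, -, -, hmono, -, hlip⟩ := hHr
  simpa only [abs_of_nonneg (sub_nonneg.2 hab),
    abs_of_nonneg (sub_nonneg.2 ((hmono t ω).monotone hab))] using (hlip t ω b a).1

theorem tendstoUniformly (hHr : HrAssumption T cl cu Ch l u hb) (t : ℝ) :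
    TendstoUniformly (fun s (p : Ω × ℝ) => hb s p.1 p.2) (fun p => hb t p.1 p.2) (𝓝 t) := by
  obtain ⟨-, -, -, -, -, -, -, -, hunif, -, -, -⟩ := hHr
  refine Metric.tendstoUniformly_iff.2 fun ε hε => ?_
  obtain ⟨δ, hδ, hclose⟩ := hunif ε hε
  filter_upwards [Metric.ball_mem_nhds t hδ] with s hs p
  refine hclose p.1 t s p.2 p.2 ?_
  rwa [sub_self, abs_zero, add_zero, ← Real.dist_eq, dist_comm]

end HrAssumption

theorem stmt3_general {Ω τ : Type*} [MeasurableSpace Ω] [TopologicalSpace τ] {I : Set τ}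
    (hI : IsCompact I) {Ps : Set (Measure Ω)} (hPs : Ps.Nonempty)
    (hprob : ∀ P ∈ Ps, IsProbabilityMeasure P) {c : ℝ} (hc : 0 < c) {κ : τ → ℝ≥0}
    {h : τ → Ω → ℝ → ℝ} (hh : ∀ t ∈ I, IsLipschitzLoss Ps (κ t) (h t))
    (hexp : ∀ t ∈ I, ∀ ω a b, a ≤ b → c * (b - a) ≤ h t ω b - h t ω a)
    (hcont : ∀ t ∈ I, TendstoUniformly (fun s (p : Ω × ℝ) => h s p.1 p.2)
      (fun p => h t p.1 p.2) (𝓝[I] t))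
    {l u : τ → ℝ} (hl : ContinuousOn l I) (hu : ContinuousOn u I) {L U : τ → (Ω → ℝ) → ℝ}
    (hL : ∀ t ∈ I, ∀ X, EIntegrable Ps X → expectedLoss Ps (h t) (L t X) X = l t)
    (hU : ∀ t ∈ I, ∀ X, EIntegrable Ps X → expectedLoss Ps (h t) (U t X) X = u t)
    {S : τ → Ω → ℝ} (hS : ∀ t ∈ I, EIntegrable Ps (S t))
    (hSc : ∀ t ∈ I, Tendsto (fun s => sublinE Ps fun ω => |S s ω - S t ω|) (𝓝[I] t) (𝓝 0)) :
    ContinuousOn (fun t => L t (S t)) I ∧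
    ContinuousOn (fun t => U t (S t)) I ∧
    ContinuousOn (fun t => L t (fun _ => 0)) I ∧
    ContinuousOn (fun t => U t (fun _ => 0)) I ∧
    ∃ M : ℝ, ∀ t ∈ I, |L t (fun _ => 0)| ≤ M ∧ |U t (fun _ => 0)| ≤ M := by
  have hcontinuous {g : τ → ℝ} (hg : ContinuousOn g I) {R : τ → (Ω → ℝ) → ℝ}
      (hR : ∀ t ∈ I, ∀ X, EIntegrable Ps X → expectedLoss Ps (h t) (R t X) X = g t) :
      ContinuousOn (fun t => R t (S t)) I ∧ ContinuousOn (fun t => R t (fun _ => 0)) I := by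
    have hzero : EIntegrable Ps fun _ => (0 : ℝ) := eintegrable_const hprob 0
    refine ⟨continuousOn_of_expectedLoss_eq hPs hprob hc hh hexp hcont hS hSc hg
      fun t ht => hR t ht _ (hS t ht), continuousOn_of_expectedLoss_eq hPs hprob hc hh hexp hcont
      (fun _ _ => hzero) (fun _ _ => ?_) hg fun t ht => hR t ht _ hzero⟩
    simpa only [sub_self, abs_zero, sublinE_const hPs hprob] using tendsto_const_nhds
  obtain ⟨hLS, hL0⟩ := hcontinuous hl hL
  obtain ⟨hUS, hU0⟩ := hcontinuous hu hU
  obtain ⟨A, hA⟩ := hI.exists_bound_of_continuousOn hL0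
  obtain ⟨B, hB⟩ := hI.exists_bound_of_continuousOn hU0
  exact ⟨hLS, hUS, hL0, hU0, max A B, fun t ht =>
    ⟨(hA t ht).trans (le_max_left A B), (hB t ht).trans (le_max_right A B)⟩⟩

/-- If `(S_t)` is mean-continuous, then `t ↦ L_t(S_t)` and `t ↦ U_t(S_t)` are
continuous on `[0,T]`; in particular `t ↦ L_t(0)` and `t ↦ U_t(0)` are continuous and bounded. -/
theorem stmt3 {Ω : Type*} [MeasurableSpace Ω] (T cl cu Ch : ℝ) (hT : 0 < T)
    (Ps : Set (Measure Ω)) (hPs : Ps.Nonempty) (hprob : ∀ P ∈ Ps, IsProbabilityMeasure P)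
    (l u : ℝ → ℝ) (hb : ℝ → Ω → ℝ → ℝ) (hHr : HrAssumption T cl cu Ch l u hb)
    (L U : ℝ → (Ω → ℝ) → ℝ)
    (hL : ∀ t ∈ Icc (0:ℝ) T, ∀ X : Ω → ℝ, EIntegrable Ps X → Hbar Ps hb t (L t X) X = l t)
    (hU : ∀ t ∈ Icc (0:ℝ) T, ∀ X : Ω → ℝ, EIntegrable Ps X → Hbar Ps hb t (U t X) X = u t)
    (S : ℝ → Ω → ℝ) (hS : MeanContinuous Ps T S) :
    ContinuousOn (fun t => L t (S t)) (Icc 0 T) ∧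
    ContinuousOn (fun t => U t (S t)) (Icc 0 T) ∧
    ContinuousOn (fun t => L t (fun _ => 0)) (Icc 0 T) ∧
    ContinuousOn (fun t => U t (fun _ => 0)) (Icc 0 T) ∧
    ∃ M : ℝ, ∀ t ∈ Icc (0:ℝ) T, |L t (fun _ => 0)| ≤ M ∧ |U t (fun _ => 0)| ≤ M := by
  have ⟨hcl, _, _, hl, hu, _⟩ := hHr
  exact stmt3_general isCompact_Icc hPs hprob hcl (fun t _ => hHr.isLipschitzLoss hprob t)
    (fun t _ => hHr.mul_sub_le t) (fun t _ v hv => nhdsWithin_le_nhds (hHr.tendstoUniformly t v hv))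
    hl hu hL hU hS.1 hS.2
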